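/- arXiv:2512.04670 — 2 statements merged into one kernel-verified Lean document; each statement's English description precedes it below -/
import Mathlib

section
/- Let v(x,t) = −(3/(2πi)) ∫_{s∈ℝ} exp( i(s+i)x + i(s+i)³ t ) · (s+i)^{−1} ds on the open quarter-plane Q. For every integer n ≥ 1, the n-th partial derivative u_n = ∂ⁿv/∂tⁿ is smooth on Q, satisfies the linear KdV equation ∂u_n/∂t = −∂³u_n/∂x³ at every point of Q, and satisfies lim_{x→0⁺} u_n(x,t) = 0 for every t > 0 and lim_{t→0⁺} u_n(x,t) = 0 for every x > 0. -/
open MeasureTheory Filter Set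

/-- The open quarter-plane `Q = {(x,t) : x > 0, t > 0}`. -/
def quarterPlane : Set (ℝ × ℝ) := {p | 0 < p.1 ∧ 0 < p.2}

/-- `v_ε(x,t) = −(3/(2πi)) ∫_{s∈ℝ} exp(i(s+iε)x + i(s+iε)³t) · (s+iε)⁻¹ ds`,
the parametrization over `s ∈ ℝ` of the contour integral over the line `Im λ = ε`. -/
noncomputable def kdvStepSol (ε : ℝ) : ℝ → ℝ → ℂ := fun x t =>
  -(3 / (2 * (Real.pi : ℂ) * Complex.I)) *
    ∫ s : ℝ, Complex.exp (Complex.I * ((s : ℂ) + Complex.I * (ε : ℂ)) * (x : ℂ) +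
        Complex.I * ((s : ℂ) + Complex.I * (ε : ℂ)) ^ 3 * (t : ℂ)) *
      ((s : ℂ) + Complex.I * (ε : ℂ))⁻¹

/-- `u_n = ∂ⁿv/∂tⁿ` (iterated partial derivative in the second variable), `v = v_1`. -/
noncomputable def kdvCounterexampleSeq (n : ℕ) : ℝ → ℝ → ℂ := fun x t =>
  iteratedDeriv n (fun s => kdvStepSol 1 x s) t

noncomputable def kl (s : ℝ) : ℂ := (s : ℂ) + Complex.I

noncomputable def kf (m : ℕ) (s x t : ℝ) : ℂ :=
  kl s ^ m * (kl s)⁻¹ * Complex.exp (Complex.I * kl s * x + Complex.I * kl s ^ 3 * t)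

noncomputable def kG (m : ℕ) (x t : ℝ) : ℂ := ∫ s : ℝ, kf m s x t

noncomputable def kB (k : ℕ) (c s : ℝ) : ℝ := (|s| + 1) ^ k * Real.exp (-c * s ^ 2)

lemma kl_ne (s : ℝ) : kl s ≠ 0 := by
  intro h
  have := congrArg Complex.im h
  simp [kl] at this

lemma kl_norm_le (s : ℝ) : ‖kl s‖ ≤ |s| + 1 := by
  refine (norm_add_le _ _).trans ?_
  simp

lemma kl_norm_ge (s : ℝ) : 1 ≤ ‖kl s‖ := by
  have := Complex.abs_im_le_norm (kl s)
  simpa [kl] using this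

lemma kl_cont : Continuous kl := by unfold kl; fun_prop

lemma kf_cont (m : ℕ) (x t : ℝ) : Continuous (fun s => kf m s x t) := by
  unfold kf
  have h := kl_cont
  have h2 : Continuous fun s => (kl s)⁻¹ := h.inv₀ kl_ne
  exact ((h.pow m).mul h2).mul (by fun_prop)

lemma kB_int (k : ℕ) {c : ℝ} (hc : 0 < c) : Integrable (kB k c) := by
  have h1 := (integrable_rpow_mul_exp_neg_mul_sq hc (s := k)
    (by have : (0:ℝ) ≤ k := Nat.cast_nonneg k
        linarith)).norm
  have h2 := integrable_exp_neg_mul_sq hc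
  refine ((h1.add h2).const_mul (2 ^ (k-1))).mono' ?_ ?_
  · unfold kB
    exact Continuous.aestronglyMeasurable (by fun_prop)
  · refine Filter.Eventually.of_forall fun s => ?_
    have h3 := add_pow_le (abs_nonneg s) zero_le_one k
    rw [Real.norm_of_nonneg (by unfold kB; positivity)]
    simp only [Pi.add_apply, norm_mul, Real.rpow_natCast, norm_pow, Real.norm_eq_abs, Real.abs_exp]
    unfold kB
    calc _ ≤ (2 ^ (k-1) * (|s| ^ k + 1 ^ k)) * Real.exp (-c * s ^ 2) := by gcongr
      _ = _ := by ring

lemma kf_norm (m : ℕ) (s x t : ℝ) :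
    ‖kf m s x t‖ ≤ (|s| + 1) ^ m * Real.exp (-x + t - 3 * t * s ^ 2) := by
  unfold kf
  rw [norm_mul, norm_mul, Complex.norm_exp, norm_pow, norm_inv]
  have h1 : (Complex.I * kl s * x + Complex.I * kl s ^ 3 * t).re = -x + t - 3 * t * s ^ 2 := by
    simp [kl, pow_succ]; ring
  rw [h1]
  have h2 : ‖kl s‖⁻¹ ≤ 1 := inv_le_one_of_one_le₀ (kl_norm_ge s)
  have h3 : ‖kl s‖ ^ m ≤ (|s| + 1) ^ m := by gcongr; exact kl_norm_le s
  gcongr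
  calc _ ≤ (|s| + 1) ^ m * 1 := by gcongr
    _ = _ := mul_one _

lemma kf_norm' (m : ℕ) (s x t K c : ℝ) (hK : -x + t ≤ K) (hc : c ≤ 3 * t) :
    ‖kf m s x t‖ ≤ Real.exp K * kB m c s := by
  refine (kf_norm m s x t).trans ?_
  have : Real.exp (-x + t - 3 * t * s ^ 2) ≤ Real.exp K * Real.exp (-c * s ^ 2) := by
    rw [← Real.exp_add]
    apply Real.exp_le_exp.2
    nlinarith [sq_nonneg s]
  unfold kB
  calc _ ≤ (|s| + 1) ^ m * (Real.exp K * Real.exp (-c * s ^ 2)) := by gcongr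
    _ = _ := by ring

lemma kf_int (m : ℕ) (x : ℝ) {t : ℝ} (ht : 0 < t) : Integrable (fun s => kf m s x t) := by
  refine ((kB_int m (c := 3 * t) (by positivity)).const_mul (Real.exp (-x + t))).mono'
    (kf_cont m x t).aestronglyMeasurable (Filter.Eventually.of_forall fun s => ?_)
  exact kf_norm' m s x t _ _ le_rfl le_rfl

noncomputable def kL1 : ℂ →L[ℝ] (ℝ × ℝ →L[ℝ] ℂ) :=
  ContinuousLinearMap.smulRightL ℝ (ℝ × ℝ) ℂ (ContinuousLinearMap.fst ℝ ℝ ℝ)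
noncomputable def kL2 : ℂ →L[ℝ] (ℝ × ℝ →L[ℝ] ℂ) :=
  ContinuousLinearMap.smulRightL ℝ (ℝ × ℝ) ℂ (ContinuousLinearMap.snd ℝ ℝ ℝ)

lemma kL1_apply (c : ℂ) (p : ℝ × ℝ) : kL1 c p = p.1 * c := by simp [kL1]
lemma kL2_apply (c : ℂ) (p : ℝ × ℝ) : kL2 c p = p.2 * c := by simp [kL2]

lemma kf_fderiv (m : ℕ) (s : ℝ) (p : ℝ × ℝ) :
    HasFDerivAt (fun p : ℝ × ℝ => kf m s p.1 p.2)
      (kL1 (Complex.I * kf (m+1) s p.1 p.2) + kL2 (Complex.I * kf (m+3) s p.1 p.2)) p := by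
  have e1 : HasFDerivAt (fun p : ℝ × ℝ => (p.1 : ℂ)) (Complex.ofRealCLM.comp (ContinuousLinearMap.fst ℝ ℝ ℝ)) p :=
    (Complex.ofRealCLM.comp (ContinuousLinearMap.fst ℝ ℝ ℝ)).hasFDerivAt
  have e2 : HasFDerivAt (fun p : ℝ × ℝ => (p.2 : ℂ)) (Complex.ofRealCLM.comp (ContinuousLinearMap.snd ℝ ℝ ℝ)) p :=
    (Complex.ofRealCLM.comp (ContinuousLinearMap.snd ℝ ℝ ℝ)).hasFDerivAt
  have := (((e1.const_mul (Complex.I * kl s)).add (e2.const_mul (Complex.I * kl s ^ 3))).cexp).const_mul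
    (kl s ^ m * (kl s)⁻¹)
  refine this.congr_fderiv ?_
  ext <;> simp [kL1_apply, kL2_apply, kf] <;> ring

lemma kG_fderiv (m : ℕ) (p : ℝ × ℝ) (hp : 0 < p.2) :
    HasFDerivAt (fun p : ℝ × ℝ => kG m p.1 p.2)
      (kL1 (Complex.I * kG (m+1) p.1 p.2) + kL2 (Complex.I * kG (m+3) p.1 p.2)) p := by
  have i1 := (kf_int (m+1) p.1 hp).const_mul Complex.I
  have i3 := (kf_int (m+3) p.1 hp).const_mul Complex.I
  have key := hasFDerivAt_integral_of_dominated_of_fderiv_le (𝕜 := ℝ) (μ := volume)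
    (F := fun (p : ℝ × ℝ) s => kf m s p.1 p.2)
    (F' := fun (p : ℝ × ℝ) s => kL1 (Complex.I * kf (m+1) s p.1 p.2) + kL2 (Complex.I * kf (m+3) s p.1 p.2))
    (x₀ := p) (s := {q : ℝ × ℝ | p.1 - 1 < q.1 ∧ p.2 / 2 < q.2 ∧ q.2 < p.2 + 1})
    (bound := fun s => ‖kL1‖ * (Real.exp (-p.1 + p.2 + 2) * kB (m+1) (p.2) s)
      + ‖kL2‖ * (Real.exp (-p.1 + p.2 + 2) * kB (m+3) (p.2) s))
    ?_ ?_ ?_ ?_ ?_ ?_ ?_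
  · refine key.congr_fderiv ?_
    rw [integral_add (kL1.integrable_comp i1) (kL2.integrable_comp i3),
      kL1.integral_comp_comm i1, kL2.integral_comp_comm i3, integral_const_mul, integral_const_mul]
    rfl
  · apply IsOpen.mem_nhds
    · exact (isOpen_lt continuous_const continuous_fst).inter
        ((isOpen_lt continuous_const continuous_snd).inter (isOpen_lt continuous_snd continuous_const))
    · simp; linarith
  · exact Filter.Eventually.of_forall fun q => (kf_cont m q.1 q.2).aestronglyMeasurable
  · exact kf_int m p.1 hp
  · exact ((kL1.integrable_comp i1).add (kL2.integrable_comp i3)).aestronglyMeasurable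
  · refine Filter.Eventually.of_forall fun s q hq => ?_
    obtain ⟨h1, h2, h3⟩ := hq
    refine (norm_add_le _ _).trans (add_le_add ?_ ?_)
    · refine (kL1.le_opNorm _).trans ?_
      gcongr
      rw [norm_mul, Complex.norm_I, one_mul]
      exact kf_norm' _ _ _ _ _ _ (by linarith) (by linarith)
    · refine (kL2.le_opNorm _).trans ?_
      gcongr
      rw [norm_mul, Complex.norm_I, one_mul]
      exact kf_norm' _ _ _ _ _ _ (by linarith) (by linarith)
  · exact (((kB_int _ hp).const_mul _).const_mul _).add (((kB_int _ hp).const_mul _).const_mul _)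
  · exact Filter.Eventually.of_forall fun s q _ => kf_fderiv m s q

lemma kopen : IsOpen {p : ℝ × ℝ | 0 < p.2} := isOpen_lt continuous_const continuous_snd

lemma kG_contDiff (n : ℕ) : ∀ m : ℕ,
    ContDiffOn ℝ n (fun p : ℝ × ℝ => kG m p.1 p.2) {p : ℝ × ℝ | 0 < p.2} := by
  induction n with
  | zero =>
    intro m
    simp only [Nat.cast_zero, contDiffOn_zero]
    exact fun p hp => (kG_fderiv m p hp).continuousAt.continuousWithinAt
  | succ n ih =>
    intro m
    push_cast
    rw [contDiffOn_succ_iff_fderiv_of_isOpen kopen]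
    refine ⟨fun p hp => (kG_fderiv m p hp).differentiableAt.differentiableWithinAt, by simp, ?_⟩
    have : ContDiffOn ℝ n (fun p : ℝ × ℝ =>
      (kL1 (Complex.I * kG (m+1) p.1 p.2) + kL2 (Complex.I * kG (m+3) p.1 p.2))) {p : ℝ × ℝ | 0 < p.2} :=
      (kL1.contDiff.comp_contDiffOn (contDiffOn_const.mul (ih (m+1)))).add
        (kL2.contDiff.comp_contDiffOn (contDiffOn_const.mul (ih (m+3))))
    exact this.congr fun p hp => (kG_fderiv m p hp).fderiv

lemma kG_dx (m : ℕ) (x t : ℝ) (ht : 0 < t) :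
    HasDerivAt (fun y => kG m y t) (Complex.I * kG (m+1) x t) x := by
  have := (kG_fderiv m (x, t) ht).comp_hasDerivAt x
    ((hasDerivAt_id x).prodMk (hasDerivAt_const x t))
  simpa [kL1_apply, kL2_apply, Function.comp_def] using this

lemma kG_dt (m : ℕ) (x t : ℝ) (ht : 0 < t) :
    HasDerivAt (fun y => kG m x y) (Complex.I * kG (m+3) x t) t := by
  have := (kG_fderiv m (x, t) ht).comp_hasDerivAt t
    ((hasDerivAt_const t x).prodMk (hasDerivAt_id t))
  simpa [kL1_apply, kL2_apply, Function.comp_def] using this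

lemma kG_euler (m : ℕ) (x t : ℝ) (ht : 0 < t) :
    m * kG m x t + Complex.I * x * kG (m+1) x t + 3 * Complex.I * t * kG (m+3) x t = 0 := by
  have i0 := (kf_int m x ht).const_mul (m:ℂ)
  have i1 := (kf_int (m+1) x ht).const_mul (Complex.I * x)
  have i3 := (kf_int (m+3) x ht).const_mul (3 * Complex.I * t)
  have h := integral_eq_zero_of_hasDerivAt_of_integrable
    (f := fun s => kf (m+1) s x t)
    (f' := fun s => m * kf m s x t + Complex.I * x * kf (m+1) s x t + 3 * Complex.I * t * kf (m+3) s x t)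
    ?_ ((i0.add i1).add i3) (kf_int (m+1) x ht)
  · have i01 : Integrable (fun s => m * kf m s x t + Complex.I * x * kf (m+1) s x t) := i0.add i1
    rw [integral_add i01 i3, integral_add i0 i1, integral_const_mul, integral_const_mul, integral_const_mul] at h
    exact h
  · intro s
    have hl : HasDerivAt kl 1 s := by
      have := (Complex.ofRealCLM.hasDerivAt (x := s)).add_const Complex.I
      exact this.congr_deriv (by simp)
    have e : (fun s => kf (m+1) s x t) = fun s => kl s ^ m *
        Complex.exp (Complex.I * kl s * x + Complex.I * kl s ^ 3 * t) := by
      ext s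
      have := kl_ne s
      unfold kf; field_simp; ring
    rw [e]
    have := (hl.pow m).mul ((((hl.const_mul Complex.I).mul_const (x:ℂ)).add
      (((hl.pow 3).const_mul Complex.I).mul_const (t:ℂ))).cexp)
    refine this.congr_deriv ?_
    have := kl_ne s
    unfold kf
    cases m with
    | zero => simp; field_simp
    | succ m => simp; field_simp; ring

lemma kG_zero (n : ℕ) (t : ℝ) (ht : 0 < t) : kG (3 * (n+1)) 0 t = 0 := by
  have ht' : (t:ℂ) ≠ 0 := by exact_mod_cast ht.ne'
  induction n with
  | zero =>
    have := kG_euler 0 0 t ht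
    simpa [ht'] using this
  | succ n ih =>
    have := kG_euler (3 * (n+1)) 0 t ht
    rw [ih] at this
    simpa [ht', mul_add] using this

lemma kG_scale (m : ℕ) (x t : ℝ) (ht : 0 < t) {e : ℝ} (he : 0 < e) :
    kG m x t = (e:ℂ) ^ m * kG m (e * x) (e ^ 3 * t) := by
  have hd : ∀ e ∈ Ioi (0:ℝ), HasDerivAt (fun e : ℝ => (e:ℂ) ^ m * kG m (e * x) (e ^ 3 * t)) 0 e := by
    intro e he
    have he : 0 < e := he
    have h1 := (kG_fderiv m (e * x, e ^ 3 * t) (by positivity)).comp_hasDerivAt e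
      (((hasDerivAt_id e).mul_const x).prodMk ((hasDerivAt_pow 3 e).mul_const t))
    have h2 := ((Complex.ofRealCLM.hasDerivAt (x := e)).pow m).mul h1
    refine h2.congr_deriv ?_
    have h3 := kG_euler m (e * x) (e ^ 3 * t) (by positivity)
    have he' : (e:ℂ) ≠ 0 := by exact_mod_cast he.ne'
    simp only [add_apply, kL1_apply, kL2_apply]
    push_cast at h3 ⊢
    simp
    cases m with
    | zero => simp at h3 ⊢; apply mul_left_cancel₀ he'; linear_combination h3
    | succ m => simp at h3 ⊢; linear_combination (e:ℂ)^m * h3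
  have := IsOpen.is_const_of_deriv_eq_zero isOpen_Ioi isPreconnected_Ioi
    (fun e he => (hd e he).differentiableAt.differentiableWithinAt) (fun e he => (hd e he).deriv)
    (show (1:ℝ) ∈ Ioi 0 by simp) (show e ∈ Ioi 0 from he)
  simpa using this

lemma kG_decay (m : ℕ) : ∃ C : ℝ, 0 ≤ C ∧ ∀ y : ℝ, 1 ≤ y → ‖kG m y (y / 2)‖ ≤ C * Real.exp (- (y / 2)) := by
  refine ⟨∫ s, kB m 1 s, integral_nonneg fun s => by unfold kB; positivity, fun y hy => ?_⟩
  rw [mul_comm, ← integral_const_mul]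
  refine norm_integral_le_of_norm_le ((kB_int m one_pos).const_mul _) (Filter.Eventually.of_forall fun s => ?_)
  exact kf_norm' _ _ _ _ _ _ (by linarith) (by linarith)

lemma kG_initial (m : ℕ) (x : ℝ) (hx : 0 < x) :
    Tendsto (fun t => kG m x t) (nhdsWithin 0 (Ioi 0)) (nhds 0) := by
  obtain ⟨C, hC, hb⟩ := kG_decay m
  -- y = e * x, e = sqrt (x / (2 t))
  have hy : Tendsto (fun t : ℝ => Real.sqrt (x / (2 * t)) * x) (nhdsWithin 0 (Ioi 0)) atTop := by
    apply Tendsto.atTop_mul_const hx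
    apply Real.tendsto_sqrt_atTop.comp
    have := (tendsto_inv_nhdsGT_zero (𝕜 := ℝ)).const_mul_atTop (show 0 < x / 2 by positivity)
    refine this.congr fun t => ?_
    ring
  have h0 : Tendsto (fun y : ℝ => C * (2 / x) ^ m * ((y / 2) ^ m * Real.exp (-(y/2)))) atTop (nhds 0) := by
    have := ((Real.tendsto_pow_mul_exp_neg_atTop_nhds_zero m).comp
      (tendsto_id.atTop_div_const (show (0:ℝ) < 2 by norm_num))).const_mul (C * (2 / x) ^ m)
    simpa using this
  refine squeeze_zero_norm' ?_ (h0.comp hy)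
  filter_upwards [hy.eventually_ge_atTop 1, self_mem_nhdsWithin] with t h1 ht
  have ht : 0 < t := ht
  have he : 0 < Real.sqrt (x / (2 * t)) := by positivity
  have hs : Real.sqrt (x / (2 * t)) ^ 2 = x / (2 * t) := Real.sq_sqrt (by positivity)
  simp only [Function.comp]
  set e := Real.sqrt (x / (2 * t))
  have h3 : e ^ 3 * t = (e * x) / 2 := by
    rw [pow_succ, hs]; field_simp
  rw [kG_scale m x t ht he, h3, norm_mul, norm_pow, Complex.norm_real, Real.norm_of_nonneg he.le]
  calc _ ≤ e ^ m * (C * Real.exp (-(e * x / 2))) := by gcongr; exact hb _ h1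
    _ = _ := by
      have : e ^ m = (2 / x) ^ m * (e * x / 2) ^ m := by
        rw [← mul_pow]; congr 1; field_simp
      rw [this]; ring

noncomputable def kC : ℂ := -(3 / (2 * (Real.pi : ℂ) * Complex.I))

lemma kseq_eq (n : ℕ) (x : ℝ) : ∀ t : ℝ, 0 < t →
    kdvCounterexampleSeq n x t = kC * Complex.I ^ n * kG (3 * n) x t := by
  induction n with
  | zero =>
    intro t ht
    simp [kdvCounterexampleSeq, kdvStepSol, kC, kG, kf, kl, mul_comm]
  | succ n ih =>
    intro t ht
    have h1 : (iteratedDeriv n (fun s => kdvStepSol 1 x s)) =ᶠ[nhds t]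
        fun t => kC * Complex.I ^ n * kG (3 * n) x t := by
      filter_upwards [lt_mem_nhds ht] with s hs using ih s hs
    unfold kdvCounterexampleSeq
    rw [iteratedDeriv_succ, h1.deriv_eq, ((kG_dt (3*n) x t ht).const_mul _).deriv]
    rw [mul_add]; ring

/-- For every `n ≥ 1`, `u_n = ∂ⁿv/∂tⁿ` is smooth on `Q`, satisfies the linear KdV
equation `∂u_n/∂t = −∂³u_n/∂x³` on `Q`, and has vanishing boundary limit (as `x → 0⁺`)
and initial limit (as `t → 0⁺`). -/
theorem kdv_counterexample_sequence (n : ℕ) (hn : 1 ≤ n) :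
    ContDiffOn ℝ (⊤ : ℕ∞) (fun p : ℝ × ℝ => kdvCounterexampleSeq n p.1 p.2)
      quarterPlane ∧
    (∀ x t : ℝ, 0 < x → 0 < t →
      deriv (fun s => kdvCounterexampleSeq n x s) t
        = -(iteratedDeriv 3 (fun y => kdvCounterexampleSeq n y t) x)) ∧
    (∀ t : ℝ, 0 < t →
      Tendsto (fun x => kdvCounterexampleSeq n x t) (nhdsWithin 0 (Ioi 0))
        (nhds (0 : ℂ))) ∧
    (∀ x : ℝ, 0 < x →
      Tendsto (fun t => kdvCounterexampleSeq n x t) (nhdsWithin 0 (Ioi 0))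
        (nhds (0 : ℂ))) := by
  refine ⟨?_, ?_, ?_, ?_⟩
  · rw [contDiffOn_infty]
    intro k
    have := (contDiffOn_const (c := kC * Complex.I ^ n)).mul ((kG_contDiff k (3*n)).mono
      (fun p (hp : p ∈ quarterPlane) => hp.2))
    exact this.congr fun p hp => kseq_eq n p.1 p.2 hp.2
  · intro x t _ ht
    have h1 : (fun s => kdvCounterexampleSeq n x s) =ᶠ[nhds t]
        fun t => kC * Complex.I ^ n * kG (3 * n) x t := by
      filter_upwards [lt_mem_nhds ht] with s hs using kseq_eq n x s hs
    have h2 : (fun y => kdvCounterexampleSeq n y t) =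
        fun y => kC * Complex.I ^ n * kG (3 * n) y t := funext fun y => kseq_eq n y t ht
    have h3 : ∀ (c : ℂ) (m : ℕ), deriv (fun y => c * kG m y t) =
        fun y => (c * Complex.I) * kG (m+1) y t := fun c m => funext fun y => by
      rw [((kG_dx m y t ht).const_mul c).deriv, mul_assoc]
    rw [h1.deriv_eq, ((kG_dt (3*n) x t ht).const_mul _).deriv, h2]
    simp only [iteratedDeriv_succ, iteratedDeriv_zero, h3]
    linear_combination (kC * Complex.I ^ n * Complex.I * kG (3*n+3) x t) * Complex.I_sq
  · intro t ht
    have h2 : (fun y => kdvCounterexampleSeq n y t) =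
        fun y => kC * Complex.I ^ n * kG (3 * n) y t := funext fun y => kseq_eq n y t ht
    rw [h2]
    have := ((kG_dx (3*n) 0 t ht).continuousAt.tendsto.const_mul (kC * Complex.I ^ n)).mono_left
      (nhdsWithin_le_nhds (s := Ioi 0))
    obtain ⟨k, rfl⟩ : ∃ k, n = k + 1 := ⟨n - 1, by omega⟩
    rwa [kG_zero k t ht, mul_zero] at this
  · intro x hx
    have := (kG_initial (3*n) x hx).const_mul (kC * Complex.I ^ n)
    rw [mul_zero] at this
    refine this.congr' ?_
    filter_upwards [self_mem_nhdsWithin] with t ht using (kseq_eq n x t ht).symm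
end

section
/- There exist infinitely many pairwise distinct functions w : Q → ℂ, each of which is smooth on Q, satisfies the linear KdV equation ∂w/∂t = −∂³w/∂x³ at every point of Q, and satisfies lim_{x→0⁺} w(x,t) = 0 for every t > 0 and lim_{t→0⁺} w(x,t) = 0 for every x > 0. -/
open MeasureTheory Filter Set

/-- `w` is smooth on `Q`, satisfies the linear KdV equation `∂w/∂t = −∂³w/∂x³` at every
point of `Q`, and has vanishing boundary limit (as `x → 0⁺`) and initial limit
(as `t → 0⁺`). -/
def IsHomogeneousKdVSol (w : ℝ → ℝ → ℂ) : Prop :=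
  ContDiffOn ℝ (⊤ : ℕ∞) (fun p : ℝ × ℝ => w p.1 p.2) quarterPlane ∧
  (∀ x t : ℝ, 0 < x → 0 < t →
    deriv (fun s => w x s) t = -(iteratedDeriv 3 (fun y => w y t) x)) ∧
  (∀ t : ℝ, 0 < t → Tendsto (fun x => w x t) (nhdsWithin 0 (Ioi 0)) (nhds (0 : ℂ))) ∧
  (∀ x : ℝ, 0 < x → Tendsto (fun t => w x t) (nhdsWithin 0 (Ioi 0)) (nhds (0 : ℂ)))

noncomputable def kE (n : ℕ) (z s : ℝ) : ℝ := s⁻¹ ^ n * Real.exp (-(s ^ 3 / 3) - z * s⁻¹ ^ 3)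

noncomputable def kI (n : ℕ) (z : ℝ) : ℝ := ∫ s in Ioi (0:ℝ), kE n z s

lemma kE_nonneg (n : ℕ) (z : ℝ) {s : ℝ} (hs : 0 < s) : 0 ≤ kE n z s := by
  unfold kE; positivity

lemma k_bound (n : ℕ) {c : ℝ} (hc : 0 < c) {r : ℝ} (hr : 0 ≤ r) :
    r ^ n * Real.exp (-(c * r ^ 3)) ≤ 1 + n.factorial / c ^ n := by
  have h1 : r ^ n ≤ 1 + r ^ (3 * n) := by
    rcases le_total r 1 with h | h
    · have := pow_le_one₀ hr h (n := n)
      have : 0 ≤ r ^ (3 * n) := by positivity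
      linarith
    · have := pow_le_pow_right₀ h (show n ≤ 3 * n by omega)
      linarith
  have h2 := Real.pow_div_factorial_le_exp (c * r ^ 3) (by positivity) n
  have h3 : Real.exp (-(c * r ^ 3)) ≤ 1 := Real.exp_le_one_iff.2 (by
    have : 0 ≤ c * r ^ 3 := by positivity
    linarith)
  have h4 : r ^ (3 * n) ≤ n.factorial / c ^ n * Real.exp (c * r ^ 3) := by
    have h5 : r ^ (3 * n) = n.factorial / c ^ n * ((c * r ^ 3) ^ n / n.factorial) := by
      rw [mul_pow, ← pow_mul]
      have : (n.factorial : ℝ) ≠ 0 := by positivity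
      field_simp
    rw [h5]
    gcongr
  have he := Real.exp_pos (-(c * r ^ 3))
  calc r ^ n * Real.exp (-(c * r ^ 3)) ≤ (1 + r ^ (3 * n)) * Real.exp (-(c * r ^ 3)) := by gcongr
    _ = Real.exp (-(c * r ^ 3)) + r ^ (3 * n) * Real.exp (-(c * r ^ 3)) := by ring
    _ ≤ 1 + (n.factorial / c ^ n * Real.exp (c * r ^ 3)) * Real.exp (-(c * r ^ 3)) := by gcongr
    _ = 1 + n.factorial / c ^ n := by rw [mul_assoc, ← Real.exp_add]; simp

lemma k_int0 (n : ℕ) : IntegrableOn (fun s : ℝ => s ^ n * Real.exp (-(s ^ 3 / 3))) (Ioi 0) := by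
  have h := integrableOn_rpow_mul_exp_neg_mul_rpow (p := 3) (s := n) (b := 1 / 3)
    (by have : (0:ℝ) ≤ n := by positivity
        linarith) (by norm_num) (by norm_num)
  refine h.congr_fun (fun s hs => ?_) measurableSet_Ioi
  simp only [Real.rpow_natCast]
  congr 2
  have : s ^ (3:ℝ) = s ^ 3 := by exact_mod_cast Real.rpow_natCast s 3
  rw [this]; ring

lemma kE_meas (n : ℕ) (z : ℝ) : Measurable (kE n z) := by
  unfold kE; fun_prop

lemma kE_le (n : ℕ) {z : ℝ} (hz : 0 < z) {s : ℝ} (hs : 0 < s) :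
    kE n z s ≤ (1 + n.factorial / z ^ n) * Real.exp (-(s ^ 3 / 3)) := by
  have h := k_bound n hz (inv_nonneg.2 hs.le)
  unfold kE
  have : -(s ^ 3 / 3) - z * s⁻¹ ^ 3 = -(z * s⁻¹ ^ 3) + -(s ^ 3 / 3) := by ring
  rw [this, Real.exp_add, ← mul_assoc]
  gcongr

lemma kE_int (n : ℕ) {z : ℝ} (hz : 0 < z) : IntegrableOn (kE n z) (Ioi 0) := by
  have h := (k_int0 0).const_mul (1 + n.factorial / z ^ n)
  refine Integrable.mono' h (kE_meas n z).aestronglyMeasurable ?_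
  refine (ae_restrict_iff' measurableSet_Ioi).2 (Eventually.of_forall fun s hs => ?_)
  rw [Real.norm_of_nonneg (kE_nonneg n z hs)]
  simpa using kE_le n hz hs

lemma kI_deriv (n : ℕ) {z : ℝ} (hz : 0 < z) : HasDerivAt (kI n) (-kI (n + 3) z) z := by
  have h := hasDerivAt_integral_of_dominated_loc_of_deriv_le
    (μ := volume.restrict (Ioi (0:ℝ))) (F := kE n) (F' := fun z s => - kE (n+3) z s) (x₀ := z)
    (s := Ioi (z / 2)) (bound := kE (n+3) (z / 2)) (Ioi_mem_nhds (by linarith))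
    (Eventually.of_forall fun z => (kE_meas n z).aestronglyMeasurable)
    (kE_int n hz) (kE_meas (n+3) z).neg.aestronglyMeasurable ?_ (kE_int _ (by linarith)) ?_
  · have h2 := h.2
    rw [integral_neg] at h2
    exact h2
  · refine (ae_restrict_iff' measurableSet_Ioi).2 (Eventually.of_forall fun s hs y hy => ?_)
    rw [norm_neg, Real.norm_of_nonneg (kE_nonneg _ _ hs)]
    unfold kE
    have hs' : (0:ℝ) < s := hs
    have hy' : z / 2 < y := hy
    gcongr
  · refine (ae_restrict_iff' measurableSet_Ioi).2 (Eventually.of_forall fun s hs y hy => ?_)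
    unfold kE
    have h := (((((hasDerivAt_id y).mul_const (s⁻¹ ^ 3)).const_sub (-(s ^ 3 / 3))).exp).const_mul (s⁻¹ ^ n))
    refine h.congr_deriv ?_
    simp only [id]
    ring

lemma kI_ode {z : ℝ} (hz : 0 < z) : 3 * z * kI 6 z = kI 0 z + 2 * kI 3 z := by
  have hder : ∀ s ∈ Ioi (0:ℝ), HasDerivAt (kE 2 z)
      (3 * z * kE 6 z s - kE 0 z s - 2 * kE 3 z s) s := by
    intro s hs
    have hs' : s ≠ 0 := ne_of_gt hs
    have hi := hasDerivAt_inv hs'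
    have h := (hi.pow 2).mul ((((hasDerivAt_id s).pow 3).div_const 3).neg.sub ((hi.pow 3).const_mul z)).exp
    unfold kE
    refine h.congr_deriv ?_
    simp only [Pi.pow_apply, Pi.neg_apply, Pi.sub_apply, id]
    norm_num
    have hc : s⁻¹ * s = 1 := inv_mul_cancel₀ hs'
    rw [← sub_eq_zero]
    field_simp
    ring_nf
    try field_simp
    try ring_nf
  have hint : IntegrableOn (fun s => 3 * z * kE 6 z s - kE 0 z s - 2 * kE 3 z s) (Ioi 0) :=
    (((kE_int 6 hz).const_mul (3 * z)).sub (kE_int 0 hz)).sub ((kE_int 3 hz).const_mul 2)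
  have hcont : ContinuousWithinAt (kE 2 z) (Ici 0) 0 := by
    have h0 : kE 2 z 0 = 0 := by simp [kE]
    unfold ContinuousWithinAt
    rw [h0]
    have hl : Tendsto (fun s : ℝ => s * (1 + (Nat.factorial 3 : ℝ) / z ^ 3)) (nhdsWithin 0 (Ici 0)) (nhds 0) := by
      have : Continuous (fun s : ℝ => s * (1 + (Nat.factorial 3 : ℝ) / z ^ 3)) := by fun_prop
      have h := (this.tendsto 0).mono_left (nhdsWithin_le_nhds (s := Ici 0))
      simpa using h
    refine tendsto_of_tendsto_of_tendsto_of_le_of_le' tendsto_const_nhds hl ?_ ?_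
    · filter_upwards [self_mem_nhdsWithin] with s hs
      unfold kE; positivity
    · filter_upwards [self_mem_nhdsWithin] with s hs
      rcases eq_or_lt_of_le (show (0:ℝ) ≤ s from hs) with h | h
      · rw [← h]; simp [kE]
      · have h1 : kE 2 z s = s * kE 3 z s := by
          unfold kE; field_simp
        rw [h1]
        gcongr
        refine (kE_le 3 hz h).trans ?_
        have : Real.exp (-(s ^ 3 / 3)) ≤ 1 := Real.exp_le_one_iff.2 (by
          have : 0 ≤ s ^ 3 := by positivity
          linarith)
        exact mul_le_of_le_one_right (by positivity) this
  have htop : Tendsto (kE 2 z) atTop (nhds 0) := by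
    have hl : Tendsto (fun s : ℝ => s⁻¹ ^ 2) atTop (nhds 0) := by
      simpa using (tendsto_inv_atTop_zero (𝕜 := ℝ)).pow 2
    refine tendsto_of_tendsto_of_tendsto_of_le_of_le' tendsto_const_nhds hl ?_ ?_
    · filter_upwards [eventually_gt_atTop 0] with s hs
      exact kE_nonneg _ _ hs
    · filter_upwards [eventually_gt_atTop 0] with s hs
      unfold kE
      refine mul_le_of_le_one_right (by positivity) (Real.exp_le_one_iff.2 ?_)
      have : 0 ≤ s ^ 3 := by positivity
      have : 0 ≤ z * s⁻¹ ^ 3 := by positivity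
      linarith
  have h := integral_Ioi_of_hasDerivAt_of_tendsto hcont hder hint htop
  have h0 : kE 2 z 0 = 0 := by simp [kE]
  have hA : Integrable (fun s => 3 * z * kE 6 z s - kE 0 z s) (volume.restrict (Ioi 0)) :=
    ((kE_int 6 hz).const_mul (3 * z)).sub (kE_int 0 hz)
  rw [h0, integral_sub hA ((kE_int 3 hz).const_mul 2),
    integral_sub ((kE_int 6 hz).const_mul (3 * z)) (kE_int 0 hz), integral_const_mul, integral_const_mul] at h
  unfold kI
  linarith

lemma kI_smooth_nat (k : ℕ) : ∀ n, ContDiffOn ℝ k (kI n) (Ioi 0) := by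
  induction k with
  | zero =>
    intro n
    exact contDiffOn_zero.2 fun z hz => (kI_deriv n hz).continuousAt.continuousWithinAt
  | succ k ih =>
    intro n
    push_cast
    rw [contDiffOn_succ_iff_deriv_of_isOpen isOpen_Ioi]
    refine ⟨fun z hz => (kI_deriv n hz).differentiableAt.differentiableWithinAt, by simp, ?_⟩
    exact (ih (n+3)).neg.congr fun z hz => (kI_deriv n hz).deriv

lemma kI_smooth (n : ℕ) : ContDiffOn ℝ (⊤ : ℕ∞) (kI n) (Ioi 0) :=
  contDiffOn_infty.2 fun k => kI_smooth_nat k n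

lemma kI_nonneg (n : ℕ) (z : ℝ) : 0 ≤ kI n z :=
  setIntegral_nonneg measurableSet_Ioi fun _ hs => kE_nonneg n z hs

lemma kI_pos {z : ℝ} (hz : 0 < z) : 0 < kI 0 z := by
  unfold kI
  rw [setIntegral_pos_iff_support_of_nonneg_ae]
  · have : Function.support (kE 0 z) ∩ Ioi 0 = Ioi 0 := by
      refine inter_eq_right.2 fun s hs => ?_
      simp [kE]
    rw [this]; simp
  · exact (ae_restrict_iff' measurableSet_Ioi).2 (Eventually.of_forall fun s hs => kE_nonneg _ _ hs)
  · exact kE_int 0 hz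

lemma kI_le_const : ∃ C : ℝ, ∀ z, 0 < z → kI 0 z ≤ C := by
  refine ⟨∫ s in Ioi (0:ℝ), s ^ 0 * Real.exp (-(s ^ 3 / 3)), fun z hz => ?_⟩
  refine setIntegral_mono_on (kE_int 0 hz) (k_int0 0) measurableSet_Ioi fun s hs => ?_
  have hs' : (0:ℝ) < s := hs
  unfold kE
  simp only [pow_zero, one_mul]
  refine Real.exp_le_exp.2 ?_
  have : 0 ≤ z * s⁻¹ ^ 3 := by positivity
  linarith

lemma kI_le_sq : ∃ C : ℝ, ∀ z, 0 < z → kI 0 z ≤ C / z ^ 2 := by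
  refine ⟨2 * ∫ s in Ioi (0:ℝ), s ^ 6 * Real.exp (-(s ^ 3 / 3)), fun z hz => ?_⟩
  have : (2 * ∫ s in Ioi (0:ℝ), s ^ 6 * Real.exp (-(s ^ 3 / 3))) / z ^ 2
    = ∫ s in Ioi (0:ℝ), (2 / z ^ 2) * (s ^ 6 * Real.exp (-(s ^ 3 / 3))) := by
    rw [integral_const_mul]; ring
  rw [this]
  refine setIntegral_mono_on (kE_int 0 hz) ((k_int0 6).const_mul _) measurableSet_Ioi fun s hs => ?_
  have hs' : (0:ℝ) < s := hs
  unfold kE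
  have h2 := Real.pow_div_factorial_le_exp (z * s⁻¹ ^ 3) (by positivity) 2
  rw [pow_zero, one_mul, sub_eq_add_neg, Real.exp_add, Real.exp_neg (z * s⁻¹ ^ 3)]
  have h3 : (Real.exp (z * s⁻¹ ^ 3))⁻¹ ≤ ((z * s⁻¹ ^ 3) ^ 2 / (Nat.factorial 2 : ℝ))⁻¹ :=
    inv_anti₀ (by positivity) h2
  have h4 : ((z * s⁻¹ ^ 3) ^ 2 / (Nat.factorial 2 : ℝ))⁻¹ = 2 / z ^ 2 * s ^ 6 := by
    simp [Nat.factorial]; field_simp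
  rw [h4] at h3
  calc _ ≤ Real.exp (-(s ^ 3 / 3)) * (2 / z ^ 2 * s ^ 6) := by gcongr
    _ = _ := by ring

noncomputable def kW (x t : ℝ) : ℝ := t ^ (-(4/3) : ℝ) * (x * kI 0 (x ^ 3 / (9 * t)))

lemma kz_pos {x t : ℝ} (hx : 0 < x) (ht : 0 < t) : 0 < x ^ 3 / (9 * t) := by positivity

lemma kW_t {x t : ℝ} (hx : 0 < x) (ht : 0 < t) : HasDerivAt (fun s => kW x s)
    (-(t ^ (-(4/3) : ℝ) * (x / t * (4 / 3 * kI 0 (x ^ 3 / (9 * t)) - x ^ 3 / (9 * t) * kI 3 (x ^ 3 / (9 * t)))))) t := by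
  have h1 : HasDerivAt (fun s : ℝ => s ^ (-(4/3) : ℝ)) (-(4/3) * (t ^ (-(4/3) : ℝ) / t)) t := by
    have := Real.hasDerivAt_rpow_const (x := t) (p := -(4/3)) (Or.inl ht.ne')
    rwa [Real.rpow_sub_one ht.ne'] at this
  have h2 : HasDerivAt (fun s : ℝ => x ^ 3 / (9 * s)) (-(x ^ 3 / (9 * t)) / t) t := by
    have := ((hasDerivAt_id t).const_mul 9).fun_inv (by simp; exact ht.ne') |>.const_mul (x ^ 3)
    refine this.congr_deriv ?_
    simp only [id]
    field_simp
  have h3 := ((kI_deriv 0 (kz_pos hx ht)).comp t h2).const_mul x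
  refine (h1.mul h3).congr_deriv ?_
  simp only [Function.comp]
  field_simp
  ring

lemma kz_x {x t : ℝ} (ht : 0 < t) :
    HasDerivAt (fun y : ℝ => y ^ 3 / (9 * t)) (x ^ 2 / (3 * t)) x := by
  refine ((hasDerivAt_pow 3 x).div_const (9 * t)).congr_deriv ?_
  norm_num
  field_simp
  ring

lemma kIz_x (n : ℕ) {x t : ℝ} (hx : 0 < x) (ht : 0 < t) :
    HasDerivAt (fun y : ℝ => kI n (y ^ 3 / (9 * t))) (-kI (n + 3) (x ^ 3 / (9 * t)) * (x ^ 2 / (3 * t))) x :=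
  HasDerivAt.comp (h₂ := kI n) x (kI_deriv n (kz_pos hx ht)) (kz_x ht)

lemma kW_x1 {x t : ℝ} (hx : 0 < x) (ht : 0 < t) : HasDerivAt (fun y => kW y t)
    (t ^ (-(4/3) : ℝ) * (kI 0 (x ^ 3 / (9 * t)) - x ^ 3 / (3 * t) * kI 3 (x ^ 3 / (9 * t)))) x := by
  refine (((hasDerivAt_id x).mul (kIz_x 0 hx ht)).const_mul _).congr_deriv ?_
  simp only [id]
  ring

lemma kW_x2 {x t : ℝ} (hx : 0 < x) (ht : 0 < t) : HasDerivAt (fun x => 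
    (t ^ (-(4/3) : ℝ) * (kI 0 (x ^ 3 / (9 * t)) - x ^ 3 / (3 * t) * kI 3 (x ^ 3 / (9 * t)))))
    (t ^ (-(4/3) : ℝ) * (x ^ 2 / (3 * t) * (kI 0 (x ^ 3 / (9 * t)) - 2 * kI 3 (x ^ 3 / (9 * t))))) x := by
  refine (((kIz_x 0 hx ht).sub (((hasDerivAt_pow 3 x).div_const (3 * t)).mul (kIz_x 3 hx ht))).const_mul _).congr_deriv ?_
  have h := kI_ode (kz_pos hx ht)
  have e : x ^ 3 / (3 * t) = 3 * (x ^ 3 / (9 * t)) := by field_simp; norm_num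
  rw [e]
  congr 1
  generalize hz : x ^ 3 / (9 * t) = z at *
  norm_num
  linear_combination (x ^ 2 / (3 * t)) * h

lemma kW_x3 {x t : ℝ} (hx : 0 < x) (ht : 0 < t) : HasDerivAt (fun x => 
    (t ^ (-(4/3) : ℝ) * (x ^ 2 / (3 * t) * (kI 0 (x ^ 3 / (9 * t)) - 2 * kI 3 (x ^ 3 / (9 * t))))))
    (t ^ (-(4/3) : ℝ) * (x / t * (4 / 3 * kI 0 (x ^ 3 / (9 * t)) - x ^ 3 / (9 * t) * kI 3 (x ^ 3 / (9 * t))))) x := by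
  refine ((((hasDerivAt_pow 2 x).div_const (3 * t)).mul ((kIz_x 0 hx ht).sub ((kIz_x 3 hx ht).const_mul 2))).const_mul _).congr_deriv ?_
  have h := kI_ode (kz_pos hx ht)
  congr 1
  simp only [Pi.sub_apply]
  have e : x ^ 2 / (3 * t) * (x ^ 2 / (3 * t)) = x / t * (x ^ 3 / (9 * t)) := by field_simp; norm_num
  have e2 : x ^ 2 / (3 * t) = (x ^ 2 / (3 * t)) := rfl
  generalize hz : x ^ 3 / (9 * t) = z at *
  generalize hq : x ^ 2 / (3 * t) = q at *
  norm_num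
  have e3 : 2 * x / (3 * t) = 2 / 3 * (x / t) := by field_simp
  rw [e3]
  linear_combination (2 / 3 * (x / t)) * h + (2 * kI 6 z - kI 3 z) * e

lemma k_iter {f f1 f2 f3 : ℝ → ℂ} (h1 : ∀ x, 0 < x → HasDerivAt f (f1 x) x)
    (h2 : ∀ x, 0 < x → HasDerivAt f1 (f2 x) x) (h3 : ∀ x, 0 < x → HasDerivAt f2 (f3 x) x)
    {x : ℝ} (hx : 0 < x) : iteratedDeriv 3 f x = f3 x := by
  have e1 : ∀ x, 0 < x → deriv f x = f1 x := fun x hx => (h1 x hx).deriv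
  have e2 : ∀ x, 0 < x → deriv (deriv f) x = f2 x := fun x hx => by
    rw [← (h2 x hx).deriv]
    exact Filter.EventuallyEq.deriv_eq (by filter_upwards [Ioi_mem_nhds hx] with y hy using e1 y hy)
  rw [iteratedDeriv_succ, iteratedDeriv_succ, iteratedDeriv_one, ← (h3 x hx).deriv]
  exact Filter.EventuallyEq.deriv_eq (by filter_upwards [Ioi_mem_nhds hx] with y hy using e2 y hy)

lemma kW_smooth : ContDiffOn ℝ (⊤ : ℕ∞) (fun p : ℝ × ℝ => kW p.1 p.2) quarterPlane := by
  unfold kW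
  refine ContDiffOn.mul ?_ (contDiff_fst.contDiffOn.mul ?_)
  · exact contDiff_snd.contDiffOn.rpow_const_of_ne fun p hp => hp.2.ne'
  · refine (kI_smooth 0).comp ?_ fun p hp => kz_pos hp.1 hp.2
    refine ContDiffOn.div (by fun_prop) (by fun_prop) fun p hp => ?_
    have := hp.2
    positivity

lemma kW_sol (c : ℂ) : IsHomogeneousKdVSol (fun x t => c * (kW x t : ℂ)) := by
  have lift : ∀ {f : ℝ → ℝ} {f' x : ℝ}, HasDerivAt f f' x →
      HasDerivAt (fun y => c * ((f y : ℝ) : ℂ)) (c * (f' : ℂ)) x := fun h => h.ofReal_comp.const_mul c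
  have lim : ∀ {f : ℝ → ℝ}, Tendsto f (nhdsWithin 0 (Ioi 0)) (nhds 0) →
      Tendsto (fun y => c * ((f y : ℝ) : ℂ)) (nhdsWithin 0 (Ioi 0)) (nhds 0) := fun {f} h => by
    have := ((Complex.continuous_ofReal.tendsto 0).comp h).const_mul c
    simpa using this
  refine ⟨?_, ?_, ?_, ?_⟩
  · exact contDiffOn_const.mul (Complex.ofRealCLM.contDiff.comp_contDiffOn kW_smooth)
  · intro x t hx ht
    rw [(lift (kW_t hx ht)).deriv, k_iter (fun x hx => lift (kW_x1 hx ht))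
      (fun x hx => lift (kW_x2 hx ht)) (fun x hx => lift (kW_x3 hx ht)) hx]
    push_cast
    ring
  · intro t ht
    refine lim ?_
    obtain ⟨C, hC⟩ := kI_le_const
    have hl : Tendsto (fun x : ℝ => t ^ (-(4/3) : ℝ) * (x * C)) (nhdsWithin 0 (Ioi 0)) (nhds 0) := by
      have : Continuous (fun x : ℝ => t ^ (-(4/3) : ℝ) * (x * C)) := by fun_prop
      have h := (this.tendsto 0).mono_left (nhdsWithin_le_nhds (s := Ioi 0))
      simpa using h
    refine tendsto_of_tendsto_of_tendsto_of_le_of_le' tendsto_const_nhds hl ?_ ?_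
    · filter_upwards [self_mem_nhdsWithin] with x hx
      have hx' : (0:ℝ) < x := hx
      have := kI_nonneg 0 (x ^ 3 / (9 * t))
      unfold kW; positivity
    · filter_upwards [self_mem_nhdsWithin] with x hx
      have hx' : (0:ℝ) < x := hx
      have := hC _ (kz_pos hx' ht)
      unfold kW; gcongr
  · intro x hx
    refine lim ?_
    obtain ⟨C, hC⟩ := kI_le_sq
    have hl : Tendsto (fun t : ℝ => t ^ ((2/3) : ℝ) * (C * 81 / x ^ 5)) (nhdsWithin 0 (Ioi 0)) (nhds 0) := by
      have : Continuous (fun t : ℝ => t ^ ((2/3) : ℝ) * (C * 81 / x ^ 5)) :=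
        (Real.continuous_rpow_const (by norm_num)).mul continuous_const
      have h := (this.tendsto 0).mono_left (nhdsWithin_le_nhds (s := Ioi 0))
      rwa [Real.zero_rpow (by norm_num), zero_mul] at h
    refine tendsto_of_tendsto_of_tendsto_of_le_of_le' tendsto_const_nhds hl ?_ ?_
    · filter_upwards [self_mem_nhdsWithin] with t ht
      have ht' : (0:ℝ) < t := ht
      have := kI_nonneg 0 (x ^ 3 / (9 * t))
      unfold kW; positivity
    · filter_upwards [self_mem_nhdsWithin] with t ht
      have ht' : (0:ℝ) < t := ht
      have := hC _ (kz_pos hx ht')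
      have e : t ^ ((2/3) : ℝ) = t ^ (-(4/3) : ℝ) * t ^ 2 := by
        rw [← Real.rpow_natCast t 2, ← Real.rpow_add ht']; norm_num
      have e2 : t ^ ((2/3) : ℝ) * (C * 81 / x ^ 5)
          = t ^ (-(4/3) : ℝ) * (x * (C / (x ^ 3 / (9 * t)) ^ 2)) := by
        rw [e]; field_simp; norm_num
      rw [e2]
      unfold kW; gcongr

/-- There are infinitely many pairwise distinct (as functions on `Q`) solutions of the
homogeneous Dirichlet IBVP for the linear KdV equation on the quarter-plane. -/
theorem kdv_infinitely_many_solutions :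
    ∃ F : ℕ → ℝ → ℝ → ℂ,
      (∀ m n : ℕ, m ≠ n → ∃ x t : ℝ, 0 < x ∧ 0 < t ∧ F m x t ≠ F n x t) ∧
      ∀ n : ℕ, IsHomogeneousKdVSol (F n) := by
  refine ⟨fun n x t => (n : ℂ) * (kW x t : ℂ), fun m n hmn => ⟨1, 1, one_pos, one_pos, ?_⟩,
    fun n => kW_sol n⟩
  have h : kW 1 1 ≠ 0 := by
    have := kI_pos (kz_pos one_pos one_pos)
    unfold kW; positivity
  have h' : (kW 1 1 : ℂ) ≠ 0 := by exact_mod_cast h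
  intro he
  exact hmn (by exact_mod_cast mul_right_cancel₀ h' he)
end
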